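/- Let D₀ = {(x₁,x₂) ∈ ℝ^d × ℝ^d : x₁ = x₂} be the diagonal and, for 0 ≤ r₁ < r₂, let C_{r₁,r₂} = {x̃ ∈ ℝ^{2d} : r₁ ≤ |x̃| ≤ r₂} and D_ε = {(x₁,x₂) : |x₁−x₂| ≤ ε}. Then for every compact set K ⊂ ℝ^{2d} \ D₀ there exist real numbers √2 < r < r', constants c₁, c₂, ε > 0, and a function R ∈ C₀^∞(ℝ^{2d}) vanishing in a neighbourhood of D₀, such that the Hessian satisfies ∇²R(x̃) ≥ c₁ 𝟙_K(x̃) − c₂ 𝟙_{C_{r,r'} \ D_ε}(x̃) as quadratic forms, for all x̃ ∈ ℝ^{2d}. -/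

import Mathlib

open Set

/-- The two-body configuration space `ℝ^{2d} = ℝ^d × ℝ^d` with its Euclidean (ℓ²) norm. -/
abbrev TwoBodyConf (d : ℕ) := WithLp 2 (EuclideanSpace ℝ (Fin d) × EuclideanSpace ℝ (Fin d))

/-- First particle coordinate. -/
def conf_fst {d : ℕ} (x : TwoBodyConf d) : EuclideanSpace ℝ (Fin d) :=
  (WithLp.equiv 2 (EuclideanSpace ℝ (Fin d) × EuclideanSpace ℝ (Fin d)) x).1

/-- Second particle coordinate. -/
def conf_snd {d : ℕ} (x : TwoBodyConf d) : EuclideanSpace ℝ (Fin d) :=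
  (WithLp.equiv 2 (EuclideanSpace ℝ (Fin d) × EuclideanSpace ℝ (Fin d)) x).2

/-!
With `u = (x₁ + x₂) / √2` and `v = (x₁ - x₂) / √2`, the function `u² + βv² - c` equals
`‖x‖² + b ‖x₁ - x₂‖² - c` for `b = (β - 1) / 2`. It is uniformly convex when `b ≥ 0`, so its
composition with a smooth, nondecreasing, convex substitute for the positive part is convex,
uniformly so where the function is at least `1`. Multiply by a cutoff which is `1` on a ball of
radius `r` containing `K` and vanishes outside the ball of radius `r'`. If `c > r'²`, the quadratic
function is negative on the diagonal inside the larger ball, so the support of the product is a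
compact set avoiding the diagonal. For `b` large the quadratic function is at least `1` on `K`, and
convexity can only fail on the part of the support where the cutoff varies.
-/

open Filter Metric Topology
open scoped ContDiff

section Primitive

variable {f : ℝ → ℝ} {a : ℝ}

lemma contDiff_infty_primitive (hf : ContDiff ℝ ∞ f) :
    ContDiff ℝ ∞ fun t => ∫ s in a..t, f s := by
  have hderiv (t : ℝ) : HasDerivAt (fun t => ∫ s in a..t, f s) (f t) t :=
    (hf.continuous.integral_hasStrictDerivAt a t).hasDerivAt
  rw [contDiff_infty_iff_deriv, deriv_eq hderiv]
  exact ⟨fun t => (hderiv t).differentiableAt, hf⟩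

lemma primitive_eq_zero_of_le (hf : ∀ s ≤ a, f s = 0) {t : ℝ} (ht : t ≤ a) :
    ∫ s in a..t, f s = 0 := by
  rw [intervalIntegral.integral_congr (g := fun _ => 0), intervalIntegral.integral_zero]
  intro s hs
  rw [uIcc_of_ge ht] at hs
  exact hf s hs.2

end Primitive

section SmoothPosPart

/-- A smooth, nondecreasing, convex substitute for the positive part `max 0 t`: it vanishes for
`t ≤ 0`, and its second derivative is `exp (-1 / t)` for `t > 0`. -/
noncomputable def smoothPosPart (t : ℝ) : ℝ :=
  ∫ s in (0 : ℝ)..t, ∫ u in (0 : ℝ)..s, expNegInvGlue u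

lemma contDiff_smoothPosPart : ContDiff ℝ ∞ smoothPosPart :=
  contDiff_infty_primitive (contDiff_infty_primitive expNegInvGlue.contDiff)

lemma smoothPosPart_of_nonpos {t : ℝ} (ht : t ≤ 0) : smoothPosPart t = 0 :=
  primitive_eq_zero_of_le
    (fun _ => primitive_eq_zero_of_le fun _ => expNegInvGlue.zero_of_nonpos) ht

lemma deriv_smoothPosPart :
    deriv smoothPosPart = fun t => ∫ s in (0 : ℝ)..t, expNegInvGlue s :=
  funext fun t =>
    (contDiff_infty_primitive expNegInvGlue.contDiff).continuous.deriv_integral _ 0 t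

lemma deriv_deriv_smoothPosPart : deriv (deriv smoothPosPart) = expNegInvGlue := by
  rw [deriv_smoothPosPart]
  exact funext fun t => (expNegInvGlue.contDiff (n := 0)).continuous.deriv_integral _ 0 t

lemma monotone_deriv_smoothPosPart : Monotone (deriv smoothPosPart) := by
  refine monotone_of_deriv_nonneg ?_ fun t => ?_
  · exact (contDiff_infty_iff_deriv.1 contDiff_smoothPosPart).2.differentiable (by simp)
  · rw [deriv_deriv_smoothPosPart]
    exact expNegInvGlue.nonneg t

lemma deriv_smoothPosPart_nonneg (t : ℝ) : 0 ≤ deriv smoothPosPart t :=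
  calc 0 = deriv smoothPosPart (min t 0) := by
        rw [deriv_smoothPosPart]
        exact (primitive_eq_zero_of_le (fun _ => expNegInvGlue.zero_of_nonpos)
          (min_le_right t 0)).symm
    _ ≤ deriv smoothPosPart t := monotone_deriv_smoothPosPart (min_le_left t 0)

lemma deriv_smoothPosPart_pos {t : ℝ} (ht : 0 < t) : 0 < deriv smoothPosPart t := by
  rw [deriv_smoothPosPart]
  exact intervalIntegral.intervalIntegral_pos_of_pos_on
    ((expNegInvGlue.contDiff (n := 0)).continuous.intervalIntegrable 0 t)
    (fun s hs => expNegInvGlue.pos_of_pos hs.1) ht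

end SmoothPosPart

section Hessian

variable {E : Type*} [NormedAddCommGroup E] [NormedSpace ℝ E]

lemma iteratedFDeriv_two_comp_apply_self {φ : ℝ → ℝ} {g : E → ℝ} {x : E}
    (hφ : ContDiffAt ℝ 2 φ (g x)) (hg : ContDiffAt ℝ 2 g x) (v : E) :
    iteratedFDeriv ℝ 2 (φ ∘ g) x ![v, v] =
      deriv φ (g x) * iteratedFDeriv ℝ 2 g x ![v, v] +
        deriv (deriv φ) (g x) * fderiv ℝ g x v ^ 2 := by
  have hφ_near : ∀ᶠ y in 𝓝 x, DifferentiableAt ℝ φ (g y) :=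
    hg.continuousAt.eventually <|
      (hφ.eventually (by simp)).mono fun _ h => h.differentiableAt two_ne_zero
  have hg_near : ∀ᶠ y in 𝓝 x, DifferentiableAt ℝ g y :=
    (hg.eventually (by simp)).mono fun _ h => h.differentiableAt two_ne_zero
  have hfderiv : fderiv ℝ (φ ∘ g) =ᶠ[𝓝 x] fun y => deriv φ (g y) • fderiv ℝ g y := by
    filter_upwards [hφ_near, hg_near] with y hφy hgy
    exact (hφy.hasDerivAt.comp_hasFDerivAt y hgy.hasFDerivAt).fderiv
  have hφ' : DifferentiableAt ℝ (deriv φ) (g x) :=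
    (hφ.derivWithin (m := 1) (by norm_num)).differentiableAt one_ne_zero
  have hg' : DifferentiableAt ℝ (fderiv ℝ g) x :=
    (hg.fderiv_right (m := 1) (by norm_num)).differentiableAt one_ne_zero
  have hφg' : HasFDerivAt (fun y => deriv φ (g y)) (deriv (deriv φ) (g x) • fderiv ℝ g x) x :=
    hφ'.hasDerivAt.comp_hasFDerivAt x hg_near.self_of_nhds.hasFDerivAt
  simp only [iteratedFDeriv_two_apply, hfderiv.fderiv_eq, (hφg'.fun_smul hg'.hasFDerivAt).fderiv,
    Matrix.cons_val_zero, Matrix.cons_val_one, add_apply,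
    smul_apply, ContinuousLinearMap.smulRight_apply, smul_eq_mul]
  ring

lemma exists_pos_neg_mul_norm_sq_le_iteratedFDeriv_two {R : E → ℝ} (hR : ContDiff ℝ 2 R)
    (hsupp : HasCompactSupport R) :
    ∃ C > 0, ∀ x v, -(C * ‖v‖ ^ 2) ≤ iteratedFDeriv ℝ 2 R x ![v, v] := by
  obtain ⟨C, hC⟩ := (hsupp.iteratedFDeriv (𝕜 := ℝ) 2).exists_bound_of_continuous
    (hR.continuous_iteratedFDeriv le_rfl)
  refine ⟨max C 1, by positivity, fun x v => neg_le_of_abs_le ?_⟩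
  calc |iteratedFDeriv ℝ 2 R x ![v, v]|
      ≤ ‖iteratedFDeriv ℝ 2 R x‖ * ‖v‖ ^ 2 := by
        simpa [Fin.prod_univ_two, sq] using (iteratedFDeriv ℝ 2 R x).le_opNorm ![v, v]
    _ ≤ max C 1 * ‖v‖ ^ 2 := by
        gcongr
        exact (hC x).trans (le_max_left C 1)

lemma indicator_sub_indicator_le_iteratedFDeriv_two {R : E → ℝ} {K U S : Set E} {c₁ c₂ : ℝ}
    (hc₂ : 0 ≤ c₂) (hsupp : tsupport R ⊆ U ∪ S)
    (hK : ∀ x ∈ K, ∀ v, c₁ * ‖v‖ ^ 2 ≤ iteratedFDeriv ℝ 2 R x ![v, v])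
    (hU : ∀ x ∈ U, ∀ v, 0 ≤ iteratedFDeriv ℝ 2 R x ![v, v])
    (hS : ∀ x ∈ S, ∀ v, -(c₂ * ‖v‖ ^ 2) ≤ iteratedFDeriv ℝ 2 R x ![v, v])
    (x v : E) :
    c₁ * K.indicator (fun _ => (1 : ℝ)) x * ‖v‖ ^ 2
      - c₂ * S.indicator (fun _ => (1 : ℝ)) x * ‖v‖ ^ 2 ≤ iteratedFDeriv ℝ 2 R x ![v, v] := by
  have hSnonneg : 0 ≤ c₂ * S.indicator (fun _ => (1 : ℝ)) x * ‖v‖ ^ 2 := by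
    have := indicator_nonneg (s := S) (fun _ _ => zero_le_one (α := ℝ)) x
    positivity
  by_cases hxK : x ∈ K
  · rw [indicator_of_mem hxK, mul_one]
    linarith [hK x hxK v]
  rw [indicator_of_notMem hxK, mul_zero, zero_mul]
  by_cases hxU : x ∈ U
  · linarith [hU x hxU v]
  by_cases hxS : x ∈ S
  · rw [indicator_of_mem hxS, mul_one, zero_sub]
    exact hS x hxS v
  have hx : x ∉ tsupport (iteratedFDeriv ℝ 2 R) := fun h =>
    (hsupp (tsupport_iteratedFDeriv_subset 2 h)).elim hxU hxS
  simp [indicator_of_notMem hxS, image_eq_zero_of_notMem_tsupport hx]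

end Hessian

section GrafForm

variable {E F : Type*} [NormedAddCommGroup E] [InnerProductSpace ℝ E]
  [NormedAddCommGroup F] [InnerProductSpace ℝ F]

lemma iteratedFDeriv_two_norm_sq_apply_self (x v : E) :
    iteratedFDeriv ℝ 2 (fun y : E => ‖y‖ ^ 2) x ![v, v] = 2 * ‖v‖ ^ 2 := by
  rw [iteratedFDeriv_two_apply, fderiv_norm_sq,
    fderiv_const_smul (innerSL ℝ).differentiableAt, ContinuousLinearMap.fderiv,
    ← real_inner_self_eq_norm_sq, two_mul, two_smul]
  rfl

lemma iteratedFDeriv_two_norm_sq_comp_apply_self (L : E →L[ℝ] F) (x v : E) :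
    iteratedFDeriv ℝ 2 (fun y => ‖L y‖ ^ 2) x ![v, v] = 2 * ‖L v‖ ^ 2 := by
  have hcomp : iteratedFDeriv ℝ 2 (fun y => ‖L y‖ ^ 2) x = _ :=
    L.iteratedFDeriv_comp_right (contDiff_norm_sq ℝ (n := 2)) x le_rfl
  rw [hcomp, ContinuousMultilinearMap.compContinuousLinearMap_apply,
    ← iteratedFDeriv_two_norm_sq_apply_self (L x)]
  congr! 1
  ext i
  fin_cases i <;> rfl

/-- The quadratic function of the Graf construction. For `L x = x₁ - x₂` it is the function
`u² + βv² - c` with `u = (x₁ + x₂) / √2`, `v = (x₁ - x₂) / √2` and `b = (β - 1) / 2`. -/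
def grafForm (L : E →L[ℝ] F) (b c : ℝ) (x : E) : ℝ :=
  ‖x‖ ^ 2 + b * ‖L x‖ ^ 2 - c

variable {L : E →L[ℝ] F} {b c : ℝ}

lemma contDiff_grafForm {n : ℕ∞ω} : ContDiff ℝ n (grafForm L b c) :=
  ((contDiff_norm_sq ℝ).add (contDiff_const.mul (L.contDiff.norm_sq ℝ))).sub contDiff_const

lemma iteratedFDeriv_two_grafForm_apply_self (x v : E) :
    iteratedFDeriv ℝ 2 (grafForm L b c) x ![v, v] = 2 * ‖v‖ ^ 2 + b * (2 * ‖L v‖ ^ 2) := by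
  have hnorm : ContDiffAt ℝ 2 (fun y : E => ‖y‖ ^ 2) x := (contDiff_norm_sq ℝ).contDiffAt
  have hL : ContDiffAt ℝ 2 (fun y => ‖L y‖ ^ 2) x := (L.contDiff.norm_sq ℝ).contDiffAt
  have hform : grafForm L b c =
      ((fun y => ‖y‖ ^ 2) + b • fun y => ‖L y‖ ^ 2) - fun _ => c := rfl
  have hbL : ContDiffAt ℝ 2 (b • fun y => ‖L y‖ ^ 2) x := hL.const_smul b
  have hsum : ContDiffAt ℝ 2 ((fun y => ‖y‖ ^ 2) + b • fun y => ‖L y‖ ^ 2) x := hnorm.add hbL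
  rw [hform, iteratedFDeriv_sub_apply hsum contDiffAt_const, iteratedFDeriv_add_apply hnorm hbL,
    iteratedFDeriv_const_smul_apply hL, iteratedFDeriv_const_of_ne two_ne_zero]
  simp [iteratedFDeriv_two_norm_sq_apply_self, iteratedFDeriv_two_norm_sq_comp_apply_self]

lemma le_iteratedFDeriv_two_smoothPosPart_comp_grafForm (hb : 0 ≤ b) (x v : E) :
    deriv smoothPosPart (grafForm L b c x) * (2 * ‖v‖ ^ 2) ≤
      iteratedFDeriv ℝ 2 (smoothPosPart ∘ grafForm L b c) x ![v, v] := by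
  have hsmooth : ContDiff ℝ 2 smoothPosPart := contDiff_infty.1 contDiff_smoothPosPart 2
  have h₁ := deriv_smoothPosPart_nonneg (grafForm L b c x)
  have h₂ : 0 ≤ deriv (deriv smoothPosPart) (grafForm L b c x) := by
    rw [deriv_deriv_smoothPosPart]
    exact expNegInvGlue.nonneg _
  calc deriv smoothPosPart (grafForm L b c x) * (2 * ‖v‖ ^ 2)
      ≤ deriv smoothPosPart (grafForm L b c x) * (2 * ‖v‖ ^ 2 + b * (2 * ‖L v‖ ^ 2)) := by
        gcongr
        exact le_add_of_nonneg_right (by positivity)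
    _ ≤ deriv smoothPosPart (grafForm L b c x) * (2 * ‖v‖ ^ 2 + b * (2 * ‖L v‖ ^ 2)) +
          deriv (deriv smoothPosPart) (grafForm L b c x) *
            fderiv ℝ (grafForm L b c) x v ^ 2 := le_add_of_nonneg_right (by positivity)
    _ = iteratedFDeriv ℝ 2 (smoothPosPart ∘ grafForm L b c) x ![v, v] := by
        rw [iteratedFDeriv_two_comp_apply_self hsmooth.contDiffAt contDiff_grafForm.contDiffAt,
          iteratedFDeriv_two_grafForm_apply_self]

lemma exists_forall_one_le_grafForm {K : Set E} (hK : IsCompact K) (hKL : ∀ x ∈ K, L x ≠ 0)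
    (c : ℝ) : ∃ b, 0 ≤ b ∧ ∀ x ∈ K, 1 ≤ grafForm L b c x := by
  obtain ⟨δ, hδ, hKδ⟩ := hK.exists_forall_le' (f := fun x => ‖L x‖ ^ 2) (a := 0) (by fun_prop)
    fun x hx => by have := hKL x hx; positivity
  refine ⟨|1 + c| / δ, by positivity, fun x hx => ?_⟩
  have hbL : |1 + c| ≤ |1 + c| / δ * ‖L x‖ ^ 2 :=
    calc |1 + c| = |1 + c| / δ * δ := (div_mul_cancel₀ _ hδ.ne').symm
      _ ≤ |1 + c| / δ * ‖L x‖ ^ 2 := by gcongr; exact hKδ x hx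
  rw [grafForm]
  linarith [le_abs_self (1 + c), sq_nonneg ‖x‖]

end GrafForm

section GrafFunction

variable {E F : Type*} [NormedAddCommGroup E] [InnerProductSpace ℝ E]
  [NormedAddCommGroup F] [InnerProductSpace ℝ F]

/-- The Graf function: the smoothed positive part of `grafForm`, multiplied by a radial cutoff. -/
noncomputable def grafFunction (χ : ContDiffBump (0 : E)) (L : E →L[ℝ] F) (b c : ℝ) (x : E) : ℝ :=
  χ x * smoothPosPart (grafForm L b c x)

variable {χ : ContDiffBump (0 : E)} {L : E →L[ℝ] F} {b c : ℝ}

lemma contDiff_grafFunction : ContDiff ℝ ∞ (grafFunction χ L b c) :=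
  χ.contDiff.mul (contDiff_smoothPosPart.comp contDiff_grafForm)

lemma hasCompactSupport_grafFunction [FiniteDimensional ℝ E] :
    HasCompactSupport (grafFunction χ L b c) :=
  χ.hasCompactSupport.mul_right

lemma tsupport_grafFunction_subset_closedBall :
    tsupport (grafFunction χ L b c) ⊆ closedBall 0 χ.rOut :=
  tsupport_mul_subset_left.trans χ.tsupport_eq.subset

lemma tsupport_grafFunction_subset_nonneg :
    tsupport (grafFunction χ L b c) ⊆ {x | 0 ≤ grafForm L b c x} := by
  refine closure_minimal (fun x hx => ?_)
    (isClosed_le continuous_const (contDiff_grafForm (n := 0)).continuous)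
  contrapose! hx
  simp [grafFunction, smoothPosPart_of_nonpos (not_le.1 hx).le]

lemma apply_ne_zero_of_mem_tsupport_grafFunction (hc : χ.rOut ^ 2 < c) {x : E}
    (hx : x ∈ tsupport (grafFunction χ L b c)) : L x ≠ 0 := by
  intro hLx
  have hform : 0 ≤ grafForm L b c x := tsupport_grafFunction_subset_nonneg hx
  have hnorm : ‖x‖ ≤ χ.rOut := by
    simpa using tsupport_grafFunction_subset_closedBall hx
  have hsq : ‖x‖ ^ 2 ≤ χ.rOut ^ 2 := by gcongr
  simp only [grafForm, hLx, norm_zero] at hform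
  linarith

lemma le_iteratedFDeriv_two_grafFunction (hb : 0 ≤ b) {x : E} (hx : x ∈ ball 0 χ.rIn) (v : E) :
    deriv smoothPosPart (grafForm L b c x) * (2 * ‖v‖ ^ 2) ≤
      iteratedFDeriv ℝ 2 (grafFunction χ L b c) x ![v, v] := by
  have hnear : grafFunction χ L b c =ᶠ[𝓝 x] smoothPosPart ∘ grafForm L b c := by
    filter_upwards [χ.eventuallyEq_one_of_mem_ball hx] with y hy
    simp [grafFunction, hy]
  rw [(hnear.iteratedFDeriv ℝ 2).eq_of_nhds]
  exact le_iteratedFDeriv_two_smoothPosPart_comp_grafForm hb x v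

lemma exists_pos_forall_lt_norm_of_mem_tsupport_grafFunction [FiniteDimensional ℝ E]
    (hc : χ.rOut ^ 2 < c) :
    ∃ ε > 0, ∀ x ∈ tsupport (grafFunction χ L b c), ε < ‖L x‖ := by
  obtain ⟨δ, hδ, hle⟩ := hasCompactSupport_grafFunction.isCompact.exists_forall_le'
    (f := fun x => ‖L x‖) (by fun_prop)
    fun x hx => norm_pos_iff.2 (apply_ne_zero_of_mem_tsupport_grafFunction hc hx)
  exact ⟨δ / 2, half_pos hδ, fun x hx => (half_lt_self hδ).trans_le (hle x hx)⟩

end GrafFunction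

theorem graf_function_two_body_general {E F : Type*}
    [NormedAddCommGroup E] [InnerProductSpace ℝ E] [FiniteDimensional ℝ E]
    [NormedAddCommGroup F] [InnerProductSpace ℝ F] (L : E →L[ℝ] F) {K : Set E}
    (hK : IsCompact K) (hKL : ∀ x ∈ K, L x ≠ 0) {r r' : ℝ} (hr : 0 < r) (hrr' : r < r')
    (hKr : K ⊆ ball 0 r) :
    ∃ (c₁ c₂ ε : ℝ) (R : E → ℝ), 0 < c₁ ∧ 0 < c₂ ∧ 0 < ε ∧
      ContDiff ℝ ∞ R ∧ HasCompactSupport R ∧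
      (∃ V : Set E, IsOpen V ∧ {x | L x = 0} ⊆ V ∧ ∀ x ∈ V, R x = 0) ∧
      ∀ x v : E,
        c₁ * K.indicator (fun _ => (1 : ℝ)) x * ‖v‖ ^ 2
          - c₂ * {y : E | (r ≤ ‖y‖ ∧ ‖y‖ ≤ r') ∧ ε < ‖L y‖}.indicator (fun _ => (1 : ℝ)) x
            * ‖v‖ ^ 2
        ≤ iteratedFDeriv ℝ 2 R x ![v, v] := by
  let χ : ContDiffBump (0 : E) := ⟨r, r', hr, hrr'⟩
  have hc : χ.rOut ^ 2 < r' ^ 2 + 1 := lt_add_one _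
  obtain ⟨b, hb, hKform⟩ := exists_forall_one_le_grafForm hK hKL (r' ^ 2 + 1)
  let R := grafFunction χ L b (r' ^ 2 + 1)
  obtain ⟨ε, hε, hsuppε⟩ : ∃ ε > 0, ∀ x ∈ tsupport R, ε < ‖L x‖ :=
    exists_pos_forall_lt_norm_of_mem_tsupport_grafFunction hc
  obtain ⟨c₂, hc₂, hRbound⟩ := exists_pos_neg_mul_norm_sq_le_iteratedFDeriv_two
    (contDiff_infty.1 contDiff_grafFunction 2 : ContDiff ℝ 2 R) hasCompactSupport_grafFunction
  have hsupp : tsupport R ⊆ ball 0 r ∪ {y | (r ≤ ‖y‖ ∧ ‖y‖ ≤ r') ∧ ε < ‖L y‖} := fun x hx => by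
    have hxr' : ‖x‖ ≤ r' := by simpa using tsupport_grafFunction_subset_closedBall hx
    rcases lt_or_ge ‖x‖ r with hxr | hxr
    · exact .inl (by simpa using hxr)
    · exact .inr ⟨⟨hxr, hxr'⟩, hsuppε x hx⟩
  have hRK (x : E) (hx : x ∈ K) (v : E) :
      deriv smoothPosPart 1 * 2 * ‖v‖ ^ 2 ≤ iteratedFDeriv ℝ 2 R x ![v, v] := by
    rw [mul_assoc]
    refine le_trans ?_ (le_iteratedFDeriv_two_grafFunction hb (hKr hx) v)
    gcongr
    exact monotone_deriv_smoothPosPart (hKform x hx)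
  have hRball (x : E) (hx : x ∈ ball 0 r) (v : E) : 0 ≤ iteratedFDeriv ℝ 2 R x ![v, v] :=
    (mul_nonneg (deriv_smoothPosPart_nonneg _) (by positivity)).trans
      (le_iteratedFDeriv_two_grafFunction hb hx v)
  exact ⟨deriv smoothPosPart 1 * 2, c₂, ε, R, mul_pos (deriv_smoothPosPart_pos one_pos) two_pos,
    hc₂, hε, contDiff_grafFunction, hasCompactSupport_grafFunction,
    ⟨(tsupport R)ᶜ, (isClosed_tsupport R).isOpen_compl,
      fun x hLx hx => apply_ne_zero_of_mem_tsupport_grafFunction hc hx hLx,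
      fun x hx => image_eq_zero_of_notMem_tsupport hx⟩,
    indicator_sub_indicator_le_iteratedFDeriv_two hc₂.le hsupp hRK hRball fun x _ => hRbound x⟩

/-- The relative coordinate `x₁ - x₂`, whose kernel is the diagonal `D₀`. -/
noncomputable def relativePosition (d : ℕ) : TwoBodyConf d →L[ℝ] EuclideanSpace ℝ (Fin d) :=
  WithLp.fstL 2 ℝ (EuclideanSpace ℝ (Fin d)) (EuclideanSpace ℝ (Fin d)) -
    WithLp.sndL 2 ℝ (EuclideanSpace ℝ (Fin d)) (EuclideanSpace ℝ (Fin d))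

lemma relativePosition_apply {d : ℕ} (x : TwoBodyConf d) :
    relativePosition d x = conf_fst x - conf_snd x :=
  rfl

/-- Construction of a Graf-type convex function adapted to the two-body problem
(Lemma 5.1 of Dybalski–Gérard):  for every compact `K ⊆ ℝ^{2d}` avoiding the diagonal
`D₀ = {x₁ = x₂}` there are `√2 < r < r'`, constants `c₁, c₂, ε > 0` and a smooth compactly
supported function `R` vanishing near `D₀` with
`∇²R(x̃) ≥ c₁ 𝟙_K(x̃) - c₂ 𝟙_{C_{r,r'} \ D_ε}(x̃)` in the sense of quadratic forms. -/
theorem graf_function_two_body (d : ℕ) (K : Set (TwoBodyConf d))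
    (hK : IsCompact K) (hKdiag : ∀ x ∈ K, conf_fst x ≠ conf_snd x) :
    ∃ (r r' c₁ c₂ ε : ℝ) (R : TwoBodyConf d → ℝ),
      Real.sqrt 2 < r ∧ r < r' ∧ 0 < c₁ ∧ 0 < c₂ ∧ 0 < ε ∧
      ContDiff ℝ (⊤ : ℕ∞) R ∧ HasCompactSupport R ∧
      (∃ V : Set (TwoBodyConf d), IsOpen V ∧ {x | conf_fst x = conf_snd x} ⊆ V ∧
        ∀ x ∈ V, R x = 0) ∧
      (∀ (x v : TwoBodyConf d),
        c₁ * K.indicator (fun _ => (1:ℝ)) x * ‖v‖ ^ 2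
          - c₂ * Set.indicator
              {y : TwoBodyConf d | (r ≤ ‖y‖ ∧ ‖y‖ ≤ r') ∧ ε < ‖conf_fst y - conf_snd y‖}
              (fun _ => (1:ℝ)) x * ‖v‖ ^ 2
        ≤ iteratedFDeriv ℝ 2 R x ![v, v]) := by
  obtain ⟨r, hr, hKr⟩ := hK.isBounded.subset_ball_lt (Real.sqrt 2) 0
  refine ⟨r, r + 1, ?_⟩
  simpa only [relativePosition_apply, sub_eq_zero, hr, lt_add_one, true_and] using
    graf_function_two_body_general (relativePosition d) hK (fun x hx => sub_ne_zero.2 (hKdiag x hx))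
      ((Real.sqrt_nonneg 2).trans_lt hr) (lt_add_one r) hKr
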